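/- Let p : E ⥤ B be a Grothendieck fibration, let r : x ⟶ z be a strongly cartesian morphism of E, and let ℓ : y ⟶ z be a vertical morphism of E (i.e. p.map ℓ is an isomorphism). Then there exist an object w of E, a vertical morphism ℓ' : w ⟶ x, and a strongly cartesian morphism r' : w ⟶ y, such that ℓ' ≫ r = r' ≫ ℓ and this commutative square is a pullback square in E. -/

import Mathlib

open CategoryTheory CategoryTheory.Limits

universe v₁ v₂ u₁ u₂

theorem vcs_over {B : Type u₁} {E : Type u₂}
    [Category.{v₁} B] [Category.{v₂} E] (p : E ⥤ B) {R : B} {a b : E} (f : R ⟶ p.obj b)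
    (φ : a ⟶ b) (h : p.IsStronglyCartesian f φ) :
    p.IsStronglyCartesian (p.map φ) φ ∧ ∃ g : p.obj a ⟶ R, IsIso g ∧ p.map φ = g ≫ f := by
  obtain rfl : p.obj a = R := IsHomLift.domain_eq p f φ
  obtain rfl : f = p.map φ := IsHomLift.eq_of_isHomLift p f φ
  exact ⟨h, 𝟙 _, inferInstance, by simp⟩

theorem vcs_lift {B : Type u₁} {E : Type u₂}
    [Category.{v₁} B] [Category.{v₂} E] (p : E ⥤ B) {a b c : E}
    (φ : a ⟶ b) (h : p.IsStronglyCartesian (p.map φ) φ) (g : p.obj c ⟶ p.obj a) (ψ : c ⟶ b)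
    (e : p.map ψ = g ≫ p.map φ) : ∃ χ : c ⟶ a, p.map χ = g ∧ χ ≫ φ = ψ := by
  have : p.IsHomLift (g ≫ p.map φ) ψ := by rw [← e]; infer_instance
  obtain ⟨χ, ⟨h1, h2⟩, -⟩ := h.universal_property' g ψ
  exact ⟨χ, (IsHomLift.eq_of_isHomLift p g χ).symm, h2⟩

theorem vcs_ext {B : Type u₁} {E : Type u₂}
    [Category.{v₁} B] [Category.{v₂} E] (p : E ⥤ B) {a b c : E}
    (φ : a ⟶ b) (h : p.IsStronglyCartesian (p.map φ) φ) (χ χ' : c ⟶ a)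
    (e : p.map χ = p.map χ') (e' : χ ≫ φ = χ' ≫ φ) : χ = χ' := by
  have : p.IsHomLift (p.map χ) χ' := by rw [e]; infer_instance
  exact Functor.IsStronglyCartesian.ext p (p.map φ) φ (p.map χ) e'

/-- In a Grothendieck fibration `p : E ⥤ B`, a strongly cartesian morphism `r : x ⟶ z` and a
vertical morphism `ℓ : y ⟶ z` can be completed to a commutative square
`ℓ' ≫ r = r' ≫ ℓ` with `ℓ'` vertical and `r'` strongly cartesian, which is moreover a
pullback square in `E`. -/
theorem vert_cart_square_exists {B : Type u₁} {E : Type u₂}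
    [Category.{v₁} B] [Category.{v₂} E] (p : E ⥤ B) [p.IsFibered]
    {x y z : E} (r : x ⟶ z) (ℓ : y ⟶ z)
    (hr : p.IsStronglyCartesian (p.map r) r) (hℓ : IsIso (p.map ℓ)) :
    ∃ (w : E) (ℓ' : w ⟶ x) (r' : w ⟶ y),
      IsIso (p.map ℓ') ∧ p.IsStronglyCartesian (p.map r') r' ∧
      ℓ' ≫ r = r' ≫ ℓ ∧ IsPullback ℓ' r' r ℓ := by
  obtain ⟨w, r', hc⟩ := Functor.IsPreFibered.exists_isCartesian' (p := p)
    (p.map r ≫ inv (p.map ℓ))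
  obtain ⟨hr', g, hg, e⟩ := vcs_over p (p.map r ≫ inv (p.map ℓ)) r' inferInstance
  obtain ⟨ℓ', rfl, h2⟩ := vcs_lift p r hr g (r' ≫ ℓ) (by simp [e])
  refine ⟨w, ℓ', r', hg, hr', h2, ⟨h2⟩, ⟨PullbackCone.IsLimit.mk _ ?_ ?_ ?_ ?_⟩⟩
  all_goals
    have key : ∀ s : PullbackCone r ℓ, ∃ m : s.pt ⟶ w,
        p.map m = p.map s.fst ≫ inv (p.map ℓ') ∧ m ≫ r' = s.snd := fun s =>
      vcs_lift p r' hr' _ _ (by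
        have := congrArg p.map s.condition
        simp only [Functor.map_comp] at this
        rw [e]
        simp [reassoc_of% this])
  · exact fun s => (key s).choose
  · intro s
    obtain ⟨h3, h4⟩ := (key s).choose_spec
    refine vcs_ext p r hr _ _ (by rw [Functor.map_comp, h3]; simp) ?_
    rw [Category.assoc, h2, reassoc_of% h4, s.condition]
  · intro s
    exact (key s).choose_spec.2
  · intro s m hm1 hm2
    obtain ⟨h3, h4⟩ := (key s).choose_spec
    refine vcs_ext p r' hr' _ _ ?_ (hm2.trans h4.symm)
    rw [h3, ← hm1]
    simp
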